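/- (Information state implies agent-state class collapse) If the agent state satisfies properties (P1) and (P2) (is an information state), then the optimal values over the four agent-state-based policy classes coincide: sup over stationary deterministic = sup over stationary stochastic = sup over non-stationary deterministic = sup over non-stationary stochastic agent-state policies, and all equal the optimal history-based value J*. -/

import Mathlib

open scoped BigOperators

section

variable {S A Y Z : Type*} [Fintype S] [Fintype A] [Fintype Y] [Fintype Z]

/-- Probability of a trajectory `(S_t,Y_t,A_t), …, (S_1,Y_1,A_1)` (listed most-recent
first) of a POMDP with initial law `ν` of `(S₁,Y₁)`, dynamics `P(s',y'|s,a)`, and a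
history-dependent stochastic policy `π(a | past (y,a)-pairs, current y)`. -/
noncomputable def probTraj (ν : S × Y → ℝ) (P : S → A → S × Y → ℝ)
    (π : List (Y × A) → Y → A → ℝ) : List (S × Y × A) → ℝ
  | [] => 1
  | (s, y, a) :: rest =>
      (match rest with
        | [] => ν (s, y)
        | (s₀, _, a₀) :: _ => P s₀ a₀ (s, y)) *
        π (rest.map fun u => (u.2.1, u.2.2)) y a * probTraj ν P π rest

/-- A valid (history-dependent) stochastic policy. -/
def validPol (π : List (Y × A) → Y → A → ℝ) : Prop :=
  ∀ h y, (∀ a, 0 ≤ π h y a) ∧ ∑ a, π h y a = 1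

/-- Expected reward at time `t+1` (trajectories are indexed chronologically by `Fin (t+1)`
and reversed into the most-recent-first convention). -/
noncomputable def expRtime (ν : S × Y → ℝ) (P : S → A → S × Y → ℝ) (r : S → A → ℝ)
    (π : List (Y × A) → Y → A → ℝ) (t : ℕ) : ℝ :=
  ∑ v : Fin (t + 1) → S × Y × A,
    probTraj ν P π (List.ofFn v).reverse * r (v (Fin.last t)).1 (v (Fin.last t)).2.2

/-- Performance `J^π = E^π[∑_{t≥1} γ^{t−1} R_t]` of a history-dependent policy. -/
noncomputable def valJ (γ : ℝ) (ν : S × Y → ℝ) (P : S → A → S × Y → ℝ)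
    (r : S → A → ℝ) (π : List (Y × A) → Y → A → ℝ) : ℝ :=
  ∑' t : ℕ, γ ^ t * expRtime ν P r π t

/-- The agent state `Z_t = σ_t(H_t)` generated by the recursive update
`Z₁ = φ₀(Y₁)`, `Z_{t+1} = φ(Z_t, Y_{t+1}, A_t)`; the history is given as the list of
past `(y,a)` pairs (most recent first) together with the current observation. -/
def sigAgg (φ0 : Y → Z) (φ : Z → Y → A → Z) : List (Y × A) → Y → Z
  | [], y => φ0 y
  | (y', a') :: rest, y => φ (sigAgg φ0 φ rest y') y a'

/-- The full trajectory obtained by attaching a state sequence to an observation-action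
history (most recent first). -/
def zipSV (w : List (Y × A)) (sv : Fin w.length → S) : List (S × Y × A) :=
  List.ofFn fun i => (sv i, (w.get i).1, (w.get i).2)

/-- Probability of observing the observation-action history `w` (most recent first). -/
noncomputable def histProb (ν : S × Y → ℝ) (P : S → A → S × Y → ℝ)
    (π : List (Y × A) → Y → A → ℝ) (w : List (Y × A)) : ℝ :=
  ∑ sv : Fin w.length → S, probTraj ν P π (zipSV w sv)

end

section

variable {S A Y Z : Type*} [Fintype S] [Fintype A] [Fintype Y] [Fintype Z]
variable [DecidableEq A]

/-- Stationary deterministic agent-state based policies. -/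
def isSD (φ0 : Y → Z) (φ : Z → Y → A → Z) (π : List (Y × A) → Y → A → ℝ) : Prop :=
  ∃ g : Z → A, ∀ past y a, π past y a = if a = g (sigAgg φ0 φ past y) then 1 else 0

/-- Stationary stochastic agent-state based policies. -/
def isSS (φ0 : Y → Z) (φ : Z → Y → A → Z) (π : List (Y × A) → Y → A → ℝ) : Prop :=
  ∃ g : Z → A → ℝ, ∀ past y, π past y = g (sigAgg φ0 φ past y)

/-- Non-stationary deterministic agent-state based policies. -/
def isND (φ0 : Y → Z) (φ : Z → Y → A → Z) (π : List (Y × A) → Y → A → ℝ) : Prop :=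
  ∃ g : ℕ → Z → A, ∀ past y a,
    π past y a = if a = g past.length (sigAgg φ0 φ past y) then 1 else 0

/-- Non-stationary stochastic agent-state based policies. -/
def isNS (φ0 : Y → Z) (φ : Z → Y → A → Z) (π : List (Y × A) → Y → A → ℝ) : Prop :=
  ∃ g : ℕ → Z → A → ℝ, ∀ past y, π past y = g past.length (sigAgg φ0 φ past y)

end

/-!
On every history of positive probability, (P1) and (P2) identify the conditional expectation of
`R_t + γ V(Z_{t+1})` given the history and the action with the lookahead of `V` at `(Z_t, A_t)`. The
dynamic program has a bounded solution `V`, because the lookahead contracts the sup distance by `γ`.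
For this `V`, every policy satisfies `E[R_t] + γ E[V(Z_{t+1})] ≤ E[V(Z_t)]`, with equality for a
greedy one; discounting and telescoping turn this into `J^π ≤ E[V(Z_1)]`, attained by the greedy
policy.
-/

theorem ciSup_subtype_eq_of_forall_le {X α : Type*} [ConditionallyCompleteLattice α]
    {p : X → Prop} {f : X → α} {x₀ : X} (h₀ : p x₀) (h : ∀ x, p x → f x ≤ f x₀) :
    ⨆ x : {x // p x}, f x = f x₀ :=
  IsGreatest.csSup_eq ⟨⟨⟨x₀, h₀⟩, rfl⟩, by rintro _ ⟨x, rfl⟩; exact h x x.2⟩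

theorem ciSup_subtype_and_eq {X α : Type*} [ConditionallyCompleteLattice α]
    {p q : X → Prop} {f : X → α} {x₀ : X} (hp : p x₀) (hq : q x₀)
    (h : ∀ x, p x → f x ≤ f x₀) :
    ⨆ x : {x // p x ∧ q x}, f x = ⨆ x : {x // p x}, f x :=
  (ciSup_subtype_eq_of_forall_le ⟨hp, hq⟩ fun x hx => h x hx.1).trans
    (ciSup_subtype_eq_of_forall_le hp h).symm

theorem abs_sum_mul_le {ι : Type*} {s : Finset ι} {w f : ι → ℝ} {C : ℝ}
    (hw : ∀ i ∈ s, 0 ≤ w i) (hf : ∀ i ∈ s, |f i| ≤ C) :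
    |∑ i ∈ s, w i * f i| ≤ (∑ i ∈ s, w i) * C := by
  rw [Finset.sum_mul]
  refine (Finset.abs_sum_le_sum_abs _ _).trans (Finset.sum_le_sum fun i hi => ?_)
  rw [abs_mul, abs_of_nonneg (hw i hi)]
  exact mul_le_mul_of_nonneg_left (hf i hi) (hw i hi)

theorem abs_iSup_sub_iSup_le {ι : Type*} [Finite ι] [Nonempty ι] {f g : ι → ℝ} {c : ℝ}
    (h : ∀ i, |f i - g i| ≤ c) : |(⨆ i, f i) - ⨆ i, g i| ≤ c := by
  have iSup_sub_iSup_le {f g : ι → ℝ} (h : ∀ i, |f i - g i| ≤ c) : (⨆ i, f i) - ⨆ i, g i ≤ c :=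
    sub_le_iff_le_add.2 <| ciSup_le fun i => by
      linarith [(abs_le.1 (h i)).2, le_ciSup (Set.finite_range g).bddAbove i]
  exact abs_sub_le_iff.2
    ⟨iSup_sub_iSup_le h, iSup_sub_iSup_le fun i => abs_sub_comm (f i) (g i) ▸ h i⟩

theorem summable_pow_mul_of_abs_le {γ : ℝ} (hγ0 : 0 ≤ γ) (hγ1 : γ < 1) {u : ℕ → ℝ} {C : ℝ}
    (hu : ∀ n, |u n| ≤ C) : Summable fun n => γ ^ n * u n := by
  refine ((summable_geometric_of_lt_one hγ0 hγ1).mul_right C).of_norm_bounded fun n => ?_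
  rw [norm_mul, norm_pow, Real.norm_of_nonneg hγ0]
  exact mul_le_mul_of_nonneg_left (hu n) (pow_nonneg hγ0 n)

theorem hasSum_sub_succ {G : Type*} [AddCommGroup G] [TopologicalSpace G] [IsTopologicalAddGroup G]
    {f : ℕ → G} (hf : Summable f) : HasSum (fun n => f n - f (n + 1)) (f 0) := by
  obtain ⟨a, ha⟩ := hf
  simpa using ha.sub ((hasSum_nat_add_iff' 1).2 ha)

theorem hasSum_pow_mul_sub_mul_succ {γ C : ℝ} (hγ0 : 0 ≤ γ) (hγ1 : γ < 1) {U : ℕ → ℝ}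
    (hU : ∀ n, |U n| ≤ C) : HasSum (fun n => γ ^ n * (U n - γ * U (n + 1))) (U 0) := by
  simpa only [pow_zero, one_mul, pow_succ, mul_assoc, mul_sub] using
    hasSum_sub_succ (summable_pow_mul_of_abs_le hγ0 hγ1 hU)

theorem tsum_pow_mul_eq_of_add_eq {γ C : ℝ} (hγ0 : 0 ≤ γ) (hγ1 : γ < 1) {R U : ℕ → ℝ}
    (hU : ∀ n, |U n| ≤ C) (h : ∀ n, R n + γ * U (n + 1) = U n) :
    ∑' n, γ ^ n * R n = U 0 := by
  simp only [fun n => eq_sub_of_add_eq (h n)]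
  exact (hasSum_pow_mul_sub_mul_succ hγ0 hγ1 hU).tsum_eq

theorem tsum_pow_mul_le_of_add_le {γ C D : ℝ} (hγ0 : 0 ≤ γ) (hγ1 : γ < 1) {R U : ℕ → ℝ}
    (hR : ∀ n, |R n| ≤ D) (hU : ∀ n, |U n| ≤ C) (h : ∀ n, R n + γ * U (n + 1) ≤ U n) :
    ∑' n, γ ^ n * R n ≤ U 0 :=
  hasSum_le (fun n => mul_le_mul_of_nonneg_left (le_sub_right_of_add_le (h n)) (pow_nonneg hγ0 n))
    (summable_pow_mul_of_abs_le hγ0 hγ1 hR).hasSum (hasSum_pow_mul_sub_mul_succ hγ0 hγ1 hU)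

theorem exists_isGreatest_range_of_contraction {Z A : Type*} [Finite A] [Nonempty A] {γ C : ℝ}
    (hγ0 : 0 ≤ γ) (hγ1 : γ < 1) {Q : (Z → ℝ) → Z → A → ℝ}
    (hQ_zero : ∀ z a, |Q 0 z a| ≤ C)
    (hQ_contract : ∀ V W : Z → ℝ, ∀ δ, (∀ z, |V z - W z| ≤ δ) →
      ∀ z a, |Q V z a - Q W z a| ≤ γ * δ) :
    ∃ V : Z → ℝ, (∃ M, ∀ z, |V z| ≤ M) ∧ ∀ z, IsGreatest (Set.range (Q V z)) (V z) := by
  have abs_apply_le (V : lp (fun _ : Z => ℝ) ⊤) (z : Z) : |V z| ≤ ‖V‖ :=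
    lp.norm_apply_le_norm (by simp) V z
  have hQ_bdd (V : lp (fun _ : Z => ℝ) ⊤) (z : Z) : |⨆ a, Q V z a| ≤ γ * ‖V‖ + C := by
    obtain ⟨a, ha⟩ := exists_eq_ciSup_of_finite (f := Q V z)
    rw [← ha, ← sub_add_cancel (Q V z a) (Q 0 z a)]
    exact (abs_add_le _ _).trans (add_le_add
      (hQ_contract V 0 _ (fun z => by simpa using abs_apply_le V z) z a) (hQ_zero z a))
  let B (V : lp (fun _ : Z => ℝ) ⊤) : lp (fun _ : Z => ℝ) ⊤ :=
    ⟨fun z => ⨆ a, Q V z a, memℓp_infty ⟨_, Set.forall_mem_range.2 (hQ_bdd V)⟩⟩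
  have hB : ContractingWith ⟨γ, hγ0⟩ B := by
    refine ⟨by exact_mod_cast hγ1, LipschitzWith.of_dist_le_mul fun V W => ?_⟩
    rw [dist_eq_norm, dist_eq_norm]
    exact lp.norm_le_of_forall_le (mul_nonneg hγ0 (norm_nonneg _)) fun z =>
      abs_iSup_sub_iSup_le (hQ_contract V W _ (abs_apply_le (V - W)) z)
  obtain ⟨V, hV⟩ : ∃ V, B V = V := ⟨_, hB.fixedPoint_isFixedPt⟩
  refine ⟨V, ⟨_, abs_apply_le V⟩, fun z => ?_⟩
  have iSup_eq : ⨆ a, Q V z a = V z := congrArg (fun V : lp (fun _ : Z => ℝ) ⊤ => V z) hV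
  rw [← iSup_eq]
  exact ⟨exists_eq_ciSup_of_finite,
    Set.forall_mem_range.2 fun a => le_ciSup (Set.finite_range _).bddAbove a⟩

theorem sum_ofFn_succ {X M : Type*} [Fintype X] [AddCommMonoid M] (n : ℕ) (F : List X → M) :
    ∑ v : Fin (n + 1) → X, F (List.ofFn v) = ∑ x, ∑ v : Fin n → X, F (x :: List.ofFn v) := by
  rw [← Fintype.sum_prod_type', ← (Fin.consEquiv fun _ => X).sum_comp]
  simp [Fin.consEquiv]

theorem sum_snoc {X M : Type*} [Fintype X] [AddCommMonoid M] (n : ℕ)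
    (F : (Fin (n + 1) → X) → M) :
    ∑ v, F v = ∑ x, ∑ u : Fin n → X, F (Fin.snoc u x) := by
  rw [← Fintype.sum_prod_type', ← (Fin.snocEquiv fun _ => X).sum_comp]
  rfl

theorem reverse_ofFn_snoc {X : Type*} {n : ℕ} (u : Fin n → X) (x : X) :
    (List.ofFn (Fin.snoc u x : Fin (n + 1) → X)).reverse = x :: (List.ofFn u).reverse := by
  rw [List.ofFn_succ_last]
  simp

theorem sum_reverse_ofFn {X M : Type*} [Fintype X] [AddCommMonoid M] (n : ℕ) (F : List X → M) :
    ∑ v : Fin n → X, F (List.ofFn v).reverse = ∑ v : Fin n → X, F (List.ofFn v) := by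
  induction n generalizing F with
  | zero => simp
  | succ n ih =>
    rw [sum_snoc, sum_ofFn_succ]
    simp only [reverse_ofFn_snoc]
    exact Finset.sum_congr rfl fun x _ => ih fun l => F (x :: l)

namespace POMDP

variable {S A Y Z : Type*}

/-- The initial law `ν` and the transition kernel `P` of a POMDP consist of probability
vectors. -/
structure IsStochastic [Fintype S] [Fintype Y] (ν : S × Y → ℝ) (P : S → A → S × Y → ℝ) :
    Prop where
  init_nonneg : ∀ sy, 0 ≤ ν sy
  init_sum : ∑ sy, ν sy = 1
  trans_nonneg : ∀ s a sy, 0 ≤ P s a sy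
  trans_sum : ∀ s a, ∑ sy, P s a sy = 1

theorem map_snd_zipSV (w : List (Y × A)) (sv : Fin w.length → S) :
    (zipSV w sv).map (fun u => (u.2.1, u.2.2)) = w := by
  simp [zipSV, List.map_ofFn, Function.comp_def]

section StateSums

variable [Fintype S]

theorem sum_zipSV_cons {M : Type*} [AddCommMonoid M] (p : Y × A) (w : List (Y × A))
    (F : S → List (S × Y × A) → M) :
    ∑ sv : Fin (p :: w).length → S, F (sv ⟨0, by simp⟩) (zipSV (p :: w) sv) =
      ∑ s, ∑ sv : Fin w.length → S, F s ((s, p) :: zipSV w sv) := by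
  rw [← Fintype.sum_prod_type']
  refine (Fintype.sum_equiv (Fin.consEquiv fun _ : Fin (w.length + 1) => S) _ _ fun x => ?_).symm
  simp [Fin.consEquiv, zipSV]

theorem sum_ofFn_eq_sum_zipSV [Fintype A] [Fintype Y] {M : Type*} [AddCommMonoid M] (n : ℕ)
    (F : List (S × Y × A) → M) :
    ∑ v : Fin n → S × Y × A, F (List.ofFn v) =
      ∑ u : Fin n → Y × A, ∑ sv : Fin (List.ofFn u).length → S, F (zipSV (List.ofFn u) sv) := by
  induction n generalizing F with
  | zero => simp [zipSV]
  | succ n ih =>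
    rw [sum_ofFn_succ,
      sum_ofFn_succ n fun w => ∑ sv : Fin w.length → S, F (zipSV w sv),
      Fintype.sum_prod_type_right]
    refine Finset.sum_congr rfl fun p _ => ?_
    simp_rw [fun w => sum_zipSV_cons (S := S) p w fun _ l => F l]
    exact (Finset.sum_congr rfl fun s _ => ih fun l => F ((s, p) :: l)).trans Finset.sum_comm

/-- The probability that the past observation-action pairs are `w` (most recent first), the current
pair is `p` and the current hidden state is `s`. -/
noncomputable def jointProb (ν : S × Y → ℝ) (P : S → A → S × Y → ℝ)
    (π : List (Y × A) → Y → A → ℝ) (w : List (Y × A)) (p : Y × A) (s : S) : ℝ :=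
  ∑ sv : Fin w.length → S, probTraj ν P π ((s, p) :: zipSV w sv)

variable (ν : S × Y → ℝ) (P : S → A → S × Y → ℝ) (π : List (Y × A) → Y → A → ℝ)

theorem jointProb_nil (p : Y × A) (s : S) :
    jointProb ν P π [] p s = ν (s, p.1) * π [] p.1 p.2 := by
  simp [jointProb, probTraj, zipSV]

theorem jointProb_cons (q : Y × A) (w : List (Y × A)) (p : Y × A) (s' : S) :
    jointProb ν P π (q :: w) p s' =
      (∑ s, jointProb ν P π w q s * P s q.2 (s', p.1)) * π (q :: w) p.1 p.2 := by
  rw [jointProb, sum_zipSV_cons q w fun _ l => probTraj ν P π ((s', p) :: l), Finset.sum_mul]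
  refine Finset.sum_congr rfl fun s _ => ?_
  rw [jointProb, Finset.sum_mul, Finset.sum_mul]
  refine Finset.sum_congr rfl fun sv _ => ?_
  rw [probTraj, List.map_cons, map_snd_zipSV]
  ring

theorem sum_jointProb (w : List (Y × A)) (p : Y × A) :
    ∑ s, jointProb ν P π w p s = histProb ν P π (p :: w) :=
  (sum_zipSV_cons p w fun _ l => probTraj ν P π l).symm

variable {ν P π}

theorem jointProb_nonneg [Fintype A] [Fintype Y] (hM : IsStochastic ν P) (hπ : validPol π)
    (w : List (Y × A)) (p : Y × A) (s : S) : 0 ≤ jointProb ν P π w p s := by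
  induction w generalizing p s with
  | nil => rw [jointProb_nil]; exact mul_nonneg (hM.init_nonneg _) ((hπ _ _).1 _)
  | cons q w ih =>
    rw [jointProb_cons]
    exact mul_nonneg (Finset.sum_nonneg fun s _ => mul_nonneg (ih q s) (hM.trans_nonneg _ _ _))
      ((hπ _ _).1 _)

theorem policy_ne_zero_of_histProb_pos {w : List (Y × A)} {p : Y × A}
    (h : 0 < histProb ν P π (p :: w)) : π w p.1 p.2 ≠ 0 := by
  intro h_zero
  refine h.ne' ((sum_jointProb ν P π w p).symm.trans (Finset.sum_eq_zero fun s _ => ?_))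
  cases w with
  | nil => rw [jointProb_nil, h_zero, mul_zero]
  | cons q w => rw [jointProb_cons, h_zero, mul_zero]

end StateSums

section StageExpectation

variable [Fintype S] [Fintype A] [Fintype Y]

/-- The expectation `E^π[f(past, (Y_{t+1}, A_{t+1}), S_{t+1})]`, with stages indexed from `0` as in
`expRtime`. -/
noncomputable def stageExp (ν : S × Y → ℝ) (P : S → A → S × Y → ℝ)
    (π : List (Y × A) → Y → A → ℝ) (t : ℕ) (f : List (Y × A) → Y × A → S → ℝ) : ℝ :=
  ∑ p : Y × A, ∑ u : Fin t → Y × A, ∑ s,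
    jointProb ν P π (List.ofFn u) p s * f (List.ofFn u) p s

theorem expRtime_eq_stageExp (ν : S × Y → ℝ) (P : S → A → S × Y → ℝ) (r : S → A → ℝ)
    (π : List (Y × A) → Y → A → ℝ) (t : ℕ) :
    expRtime ν P r π t = stageExp ν P π t fun _ p s => r s p.2 := by
  calc expRtime ν P r π t
      = ∑ x : S × Y × A, ∑ v : Fin t → S × Y × A,
          probTraj ν P π (x :: (List.ofFn v).reverse) * r x.1 x.2.2 := by
        simp only [expRtime, sum_snoc, reverse_ofFn_snoc, Fin.snoc_last]
    _ = ∑ p : Y × A, ∑ s, ∑ v : Fin t → S × Y × A,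
          probTraj ν P π ((s, p) :: List.ofFn v) * r s p.2 := by
        rw [Fintype.sum_prod_type_right]
        exact Finset.sum_congr rfl fun p _ => Finset.sum_congr rfl fun s _ =>
          sum_reverse_ofFn t fun l => probTraj ν P π ((s, p) :: l) * r s p.2
    _ = stageExp ν P π t fun _ p s => r s p.2 := by
        refine Finset.sum_congr rfl fun p _ => Eq.trans ?_ Finset.sum_comm
        refine Finset.sum_congr rfl fun s _ => ?_
        simp only [jointProb, Finset.sum_mul]
        exact sum_ofFn_eq_sum_zipSV t fun l => probTraj ν P π ((s, p) :: l) * r s p.2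

theorem sum_mul_policy_mul {c f : S × Y → ℝ} {ρ : Y → A → ℝ} (hρ : ∀ y, ∑ a, ρ y a = 1) :
    ∑ p : Y × A, ∑ s, c (s, p.1) * ρ p.1 p.2 * f (s, p.1) = ∑ sy, c sy * f sy := by
  rw [Fintype.sum_prod_type, Fintype.sum_prod_type_right]
  refine Finset.sum_congr rfl fun y _ => ?_
  rw [Finset.sum_comm]
  refine Finset.sum_congr rfl fun s _ => ?_
  simp only [← Finset.sum_mul, ← Finset.mul_sum, hρ, mul_one]

section Recursion

variable (ν : S × Y → ℝ) (P : S → A → S × Y → ℝ) {π : List (Y × A) → Y → A → ℝ}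

theorem stageExp_zero (hπ : validPol π) (f : List (Y × A) → S × Y → ℝ) :
    stageExp ν P π 0 (fun w p s => f w (s, p.1)) = ∑ sy, ν sy * f [] sy := by
  simp only [stageExp, List.ofFn_zero, jointProb_nil, Fintype.sum_unique]
  exact sum_mul_policy_mul fun y => (hπ [] y).2

theorem sum_jointProb_cons_mul (hπ : validPol π) (q : Y × A) (w : List (Y × A))
    (f : S × Y → ℝ) :
    ∑ p : Y × A, ∑ s', jointProb ν P π (q :: w) p s' * f (s', p.1) =
      ∑ s, jointProb ν P π w q s * ∑ sy, P s q.2 sy * f sy := by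
  simp only [jointProb_cons]
  rw [sum_mul_policy_mul (c := fun sy => ∑ s, jointProb ν P π w q s * P s q.2 sy)
    fun y => (hπ (q :: w) y).2]
  simp only [Finset.sum_mul, Finset.mul_sum, mul_assoc]
  exact Finset.sum_comm

theorem stageExp_succ (hπ : validPol π) (t : ℕ) (f : List (Y × A) → S × Y → ℝ) :
    stageExp ν P π (t + 1) (fun w p s => f w (s, p.1)) =
      stageExp ν P π t fun w p s => ∑ sy, P s p.2 sy * f (p :: w) sy := by
  calc stageExp ν P π (t + 1) (fun w p s => f w (s, p.1))
      = ∑ p : Y × A, ∑ q, ∑ u : Fin t → Y × A, ∑ s,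
          jointProb ν P π (q :: List.ofFn u) p s * f (q :: List.ofFn u) (s, p.1) :=
        Finset.sum_congr rfl fun p _ =>
          sum_ofFn_succ t fun w => ∑ s, jointProb ν P π w p s * f w (s, p.1)
    _ = ∑ q, ∑ u : Fin t → Y × A, ∑ p : Y × A, ∑ s,
          jointProb ν P π (q :: List.ofFn u) p s * f (q :: List.ofFn u) (s, p.1) := by
        rw [Finset.sum_comm]
        exact Finset.sum_congr rfl fun q _ => Finset.sum_comm
    _ = stageExp ν P π t fun w p s => ∑ sy, P s p.2 sy * f (p :: w) sy :=
        Finset.sum_congr rfl fun q _ => Finset.sum_congr rfl fun u _ =>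
          sum_jointProb_cons_mul ν P hπ q (List.ofFn u) (f (q :: List.ofFn u))

theorem stageExp_add_mul (π : List (Y × A) → Y → A → ℝ) (t : ℕ)
    (f g : List (Y × A) → Y × A → S → ℝ) (c : ℝ) :
    stageExp ν P π t f + c * stageExp ν P π t g =
      stageExp ν P π t fun w p s => f w p s + c * g w p s := by
  simp only [stageExp, Finset.mul_sum, ← Finset.sum_add_distrib, mul_add, mul_left_comm c]

end Recursion

variable {ν : S × Y → ℝ} {P : S → A → S × Y → ℝ} {π : List (Y × A) → Y → A → ℝ}

theorem stageExp_one (hM : IsStochastic ν P) (hπ : validPol π) (t : ℕ) :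
    stageExp ν P π t (fun _ _ _ => 1) = 1 := by
  induction t with
  | zero => simpa [hM.init_sum] using stageExp_zero ν P hπ fun _ _ => 1
  | succ t ih => simpa [hM.trans_sum, ih] using stageExp_succ ν P hπ t fun _ _ => 1

theorem abs_stageExp_le (hM : IsStochastic ν P) (hπ : validPol π) (t : ℕ)
    {f : List (Y × A) → Y × A → S → ℝ} {C : ℝ} (hf : ∀ w p s, |f w p s| ≤ C) :
    |stageExp ν P π t f| ≤ C := by
  have h_one := stageExp_one hM hπ t
  simp only [stageExp, mul_one, ← Fintype.sum_prod_type'] at h_one ⊢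
  refine (abs_sum_mul_le (fun _ _ => jointProb_nonneg hM hπ _ _ _) fun _ _ => hf _ _ _).trans_eq ?_
  rw [h_one, one_mul]

theorem stageExp_mono (hM : IsStochastic ν P) (hπ : validPol π) (t : ℕ)
    {f g : List (Y × A) → Y × A → S → ℝ}
    (h : ∀ w p, 0 < histProb ν P π (p :: w) →
      ∑ s, jointProb ν P π w p s * f w p s ≤ ∑ s, jointProb ν P π w p s * g w p s) :
    stageExp ν P π t f ≤ stageExp ν P π t g := by
  refine Finset.sum_le_sum fun p _ => Finset.sum_le_sum fun u _ => ?_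
  have joint_nonneg := jointProb_nonneg hM hπ (List.ofFn u) p
  rcases (Finset.sum_nonneg fun s _ => joint_nonneg s).eq_or_lt with h_zero | h_pos
  · have joint_zero := (Finset.sum_eq_zero_iff_of_nonneg fun s _ => joint_nonneg s).1 h_zero.symm
    exact (Finset.sum_congr rfl fun s hs => by simp only [joint_zero s hs, zero_mul]).le
  · exact h _ _ (sum_jointProb ν P π _ p ▸ h_pos)

theorem stageExp_congr (hM : IsStochastic ν P) (hπ : validPol π) (t : ℕ)
    {f g : List (Y × A) → Y × A → S → ℝ}
    (h : ∀ w p, 0 < histProb ν P π (p :: w) →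
      ∑ s, jointProb ν P π w p s * f w p s = ∑ s, jointProb ν P π w p s * g w p s) :
    stageExp ν P π t f = stageExp ν P π t g :=
  (stageExp_mono hM hπ t fun w p hp => (h w p hp).le).antisymm
    (stageExp_mono hM hπ t fun w p hp => (h w p hp).ge)

end StageExpectation

section DeterministicPolicy

variable [DecidableEq A]

/-- The stationary deterministic agent-state policy playing `g`, with values `0` and `1` as
action probabilities. -/
def deterministicPolicy (φ0 : Y → Z) (φ : Z → Y → A → Z) (g : Z → A) :
    List (Y × A) → Y → A → ℝ :=
  fun past y a => if a = g (sigAgg φ0 φ past y) then 1 else 0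

theorem validPol_deterministicPolicy [Fintype A] (φ0 : Y → Z) (φ : Z → Y → A → Z) (g : Z → A) :
    validPol (deterministicPolicy φ0 φ g) := by
  refine fun past y => ⟨fun a => ?_, by simp [deterministicPolicy]⟩
  unfold deterministicPolicy
  split_ifs <;> norm_num

theorem eq_of_histProb_deterministicPolicy_pos [Fintype S] {ν : S × Y → ℝ}
    {P : S → A → S × Y → ℝ} {φ0 : Y → Z} {φ : Z → Y → A → Z} {g : Z → A} {w : List (Y × A)}
    {p : Y × A} (hp : 0 < histProb ν P (deterministicPolicy φ0 φ g) (p :: w)) :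
    p.2 = g (sigAgg φ0 φ w p.1) := by
  by_contra h
  exact policy_ne_zero_of_histProb_pos hp (if_neg h)

end DeterministicPolicy

section InformationState

variable [Fintype S] [Fintype A] [Fintype Y]

/-- The agent state generated by `φ0` and `φ` is an information state with reward `rIS` and
transition probabilities `PIS`: the fields are (P1) and (P2). Conditional expectations are encoded
as quotients by the probability of the history, under every policy giving that history positive
probability. -/
structure IsInformationState [DecidableEq Z] (ν : S × Y → ℝ) (P : S → A → S × Y → ℝ)
    (r : S → A → ℝ) (φ0 : Y → Z) (φ : Z → Y → A → Z) (rIS : Z → A → ℝ) (PIS : Z → A → Z → ℝ) :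
    Prop where
  reward : ∀ π : List (Y × A) → Y → A → ℝ, validPol π →
    ∀ (y : Y) (a : A) (past : List (Y × A)),
      0 < histProb ν P π ((y, a) :: past) →
      (∑ sv : Fin ((y, a) :: past).length → S,
          probTraj ν P π (zipSV ((y, a) :: past) sv) * r (sv ⟨0, by simp⟩) a) /
        histProb ν P π ((y, a) :: past) = rIS (sigAgg φ0 φ past y) a
  transition : ∀ π : List (Y × A) → Y → A → ℝ, validPol π →
    ∀ (y : Y) (a : A) (past : List (Y × A)) (z' : Z),
      0 < histProb ν P π ((y, a) :: past) →
      (∑ sv : Fin ((y, a) :: past).length → S, ∑ sy' : S × Y,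
          probTraj ν P π (zipSV ((y, a) :: past) sv) * P (sv ⟨0, by simp⟩) a sy' *
            (if z' = φ (sigAgg φ0 φ past y) sy'.2 a then 1 else 0)) /
        histProb ν P π ((y, a) :: past) = PIS (sigAgg φ0 φ past y) a z'

/-- The agent state `z` and the action `a` occur together with positive probability under some
policy; these are the pairs at which (P1) and (P2) determine `rIS z a` and `PIS z a`. -/
def IsReachable (ν : S × Y → ℝ) (P : S → A → S × Y → ℝ) (φ0 : Y → Z) (φ : Z → Y → A → Z)
    (z : Z) (a : A) : Prop :=
  ∃ (π : List (Y × A) → Y → A → ℝ) (past : List (Y × A)) (y : Y),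
    validPol π ∧ 0 < histProb ν P π ((y, a) :: past) ∧ sigAgg φ0 φ past y = z

/-- The expectation of `V` at the next agent state under `PIS z a`. Only the finitely many possible
successors of `z` are summed over, as `Z` may be infinite. -/
noncomputable def nextValue [DecidableEq Z] (φ : Z → Y → A → Z) (PIS : Z → A → Z → ℝ)
    (V : Z → ℝ) (z : Z) (a : A) : ℝ :=
  ∑ z' ∈ Finset.univ.image fun y => φ z y a, PIS z a z' * V z'

/-- The right-hand side of the information-state dynamic program at `z` and `a`, with continuation
value `V`. -/
noncomputable def lookahead [DecidableEq Z] (γ : ℝ) (φ : Z → Y → A → Z) (rIS : Z → A → ℝ)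
    (PIS : Z → A → Z → ℝ) (V : Z → ℝ) (z : Z) (a : A) : ℝ :=
  rIS z a + γ * nextValue φ PIS V z a

/-- The expectation `E^π[V(Z_{t+1})]` of a function of the agent state, with stages indexed
from `0`. -/
noncomputable def stageValue (ν : S × Y → ℝ) (P : S → A → S × Y → ℝ) (φ0 : Y → Z)
    (φ : Z → Y → A → Z) (π : List (Y × A) → Y → A → ℝ) (V : Z → ℝ) (t : ℕ) : ℝ :=
  stageExp ν P π t fun w p _ => V (sigAgg φ0 φ w p.1)

variable {ν : S × Y → ℝ} {P : S → A → S × Y → ℝ} {r : S → A → ℝ} {φ0 : Y → Z}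
  {φ : Z → Y → A → Z} {rIS : Z → A → ℝ} {PIS : Z → A → Z → ℝ} {π : List (Y × A) → Y → A → ℝ}

theorem abs_expRtime_le (hM : IsStochastic ν P) (hπ : validPol π) (t : ℕ) :
    |expRtime ν P r π t| ≤ ‖r‖ := by
  rw [expRtime_eq_stageExp]
  exact abs_stageExp_le hM hπ t fun _ p s =>
    (norm_le_pi_norm (r s) p.2).trans (norm_le_pi_norm r s)

theorem abs_stageValue_le (hM : IsStochastic ν P) (hπ : validPol π) {V : Z → ℝ} {C : ℝ}
    (hV : ∀ z, |V z| ≤ C) (t : ℕ) : |stageValue ν P φ0 φ π V t| ≤ C :=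
  abs_stageExp_le hM hπ t fun _ _ _ => hV _

theorem stageValue_zero (hπ : validPol π) (V : Z → ℝ) :
    stageValue ν P φ0 φ π V 0 = ∑ sy, ν sy * V (φ0 sy.2) :=
  stageExp_zero ν P hπ fun w sy => V (sigAgg φ0 φ w sy.2)

theorem abs_le_of_sum_jointProb_mul_eq (hM : IsStochastic ν P) (hπ : validPol π)
    {w : List (Y × A)} {p : Y × A} (hp : 0 < histProb ν P π (p :: w)) {f : S → ℝ} {c C : ℝ}
    (hf : ∀ s, |f s| ≤ C)
    (h : ∑ s, jointProb ν P π w p s * f s = histProb ν P π (p :: w) * c) : |c| ≤ C := by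
  refine le_of_mul_le_mul_left ?_ hp
  rw [← abs_of_pos hp, ← abs_mul, ← h, abs_of_pos hp, ← sum_jointProb]
  exact abs_sum_mul_le (fun s _ => jointProb_nonneg hM hπ w p s) fun s _ => hf s

namespace IsInformationState

variable [DecidableEq Z]

theorem sum_jointProb_mul_reward (hIS : IsInformationState ν P r φ0 φ rIS PIS)
    (hπ : validPol π) {w : List (Y × A)} {p : Y × A} (hp : 0 < histProb ν P π (p :: w)) :
    ∑ s, jointProb ν P π w p s * r s p.2 =
      histProb ν P π (p :: w) * rIS (sigAgg φ0 φ w p.1) p.2 := by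
  rw [← hIS.reward π hπ p.1 p.2 w hp, mul_div_cancel₀ _ hp.ne',
    sum_zipSV_cons p w fun s l => probTraj ν P π l * r s p.2]
  simp only [jointProb, Finset.sum_mul]

theorem sum_jointProb_mul_transition (hIS : IsInformationState ν P r φ0 φ rIS PIS)
    (hπ : validPol π) {w : List (Y × A)} {p : Y × A} (hp : 0 < histProb ν P π (p :: w))
    (z' : Z) :
    ∑ s, jointProb ν P π w p s * ∑ sy : S × Y, P s p.2 sy *
        (if z' = φ (sigAgg φ0 φ w p.1) sy.2 p.2 then 1 else 0) =
      histProb ν P π (p :: w) * PIS (sigAgg φ0 φ w p.1) p.2 z' := by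
  rw [← hIS.transition π hπ p.1 p.2 w z' hp, mul_div_cancel₀ _ hp.ne',
    sum_zipSV_cons p w fun s l => ∑ sy : S × Y, probTraj ν P π l * P s p.2 sy *
      (if z' = φ (sigAgg φ0 φ w p.1) sy.2 p.2 then 1 else 0)]
  simp only [jointProb, Finset.sum_mul, Finset.mul_sum, mul_assoc]
  exact Finset.sum_congr rfl fun s _ => Finset.sum_comm

theorem sum_jointProb_mul_nextValue (hIS : IsInformationState ν P r φ0 φ rIS PIS)
    (hπ : validPol π) {w : List (Y × A)} {p : Y × A} (hp : 0 < histProb ν P π (p :: w))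
    (V : Z → ℝ) :
    ∑ s, jointProb ν P π w p s * ∑ sy, P s p.2 sy * V (φ (sigAgg φ0 φ w p.1) sy.2 p.2) =
      histProb ν P π (p :: w) * nextValue φ PIS V (sigAgg φ0 φ w p.1) p.2 := by
  set z := sigAgg φ0 φ w p.1
  have V_eq_sum (y : Y) : V (φ z y p.2) = ∑ z' ∈ Finset.univ.image fun y => φ z y p.2,
      (if z' = φ z y p.2 then 1 else 0) * V z' := by
    simp
  calc ∑ s, jointProb ν P π w p s * ∑ sy, P s p.2 sy * V (φ z sy.2 p.2)
      = ∑ s, ∑ z' ∈ Finset.univ.image fun y => φ z y p.2,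
          (jointProb ν P π w p s * ∑ sy : S × Y, P s p.2 sy *
            (if z' = φ z sy.2 p.2 then 1 else 0)) * V z' := by
        refine Finset.sum_congr rfl fun s _ => ?_
        simp only [V_eq_sum, Finset.mul_sum, Finset.sum_mul, mul_assoc]
        exact Finset.sum_comm
    _ = ∑ z' ∈ Finset.univ.image fun y => φ z y p.2,
          (histProb ν P π (p :: w) * PIS z p.2 z') * V z' := by
        rw [Finset.sum_comm]
        refine Finset.sum_congr rfl fun z' _ => ?_
        rw [← Finset.sum_mul, hIS.sum_jointProb_mul_transition hπ hp]
    _ = histProb ν P π (p :: w) * nextValue φ PIS V z p.2 := by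
        simp only [nextValue, Finset.mul_sum, mul_assoc]

theorem abs_reward_le (hIS : IsInformationState ν P r φ0 φ rIS PIS) (hM : IsStochastic ν P)
    {z : Z} {a : A} (hza : IsReachable ν P φ0 φ z a) : |rIS z a| ≤ ‖r‖ := by
  obtain ⟨π, w, y, hπ, hp, rfl⟩ := hza
  exact abs_le_of_sum_jointProb_mul_eq hM hπ hp
    (fun s => (norm_le_pi_norm (r s) a).trans (norm_le_pi_norm r s))
    (hIS.sum_jointProb_mul_reward hπ hp)

theorem abs_nextValue_le (hIS : IsInformationState ν P r φ0 φ rIS PIS) (hM : IsStochastic ν P)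
    {z : Z} {a : A} (hza : IsReachable ν P φ0 φ z a) {V : Z → ℝ} {C : ℝ}
    (hV : ∀ z, |V z| ≤ C) : |nextValue φ PIS V z a| ≤ C := by
  obtain ⟨π, w, y, hπ, hp, rfl⟩ := hza
  refine abs_le_of_sum_jointProb_mul_eq hM hπ hp (fun s => ?_)
    (hIS.sum_jointProb_mul_nextValue hπ hp V)
  refine (abs_sum_mul_le (fun sy _ => hM.trans_nonneg s a sy) fun sy _ => hV _).trans_eq ?_
  rw [hM.trans_sum, one_mul]

theorem exists_optimality_equation [Nonempty A]
    (hIS : IsInformationState ν P r φ0 φ rIS PIS) (hM : IsStochastic ν P) {γ : ℝ}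
    (hγ0 : 0 ≤ γ) (hγ1 : γ < 1) :
    ∃ (V : Z → ℝ) (g : Z → A), (∃ C, ∀ z, |V z| ≤ C) ∧
      (∀ z a, IsReachable ν P φ0 φ z a → lookahead γ φ rIS PIS V z a ≤ V z) ∧
      ∀ z, IsReachable ν P φ0 φ z (g z) → lookahead γ φ rIS PIS V z (g z) = V z := by
  classical
  -- Off the reachable pairs `rIS` and `PIS` are arbitrary, and the lookahead need not contract.
  let Q (V : Z → ℝ) (z : Z) (a : A) : ℝ :=
    if IsReachable ν P φ0 φ z a then lookahead γ φ rIS PIS V z a else 0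
  have Q_zero (z : Z) (a : A) : |Q 0 z a| ≤ ‖r‖ := by
    by_cases hza : IsReachable ν P φ0 φ z a
    · simpa [Q, hza, lookahead, nextValue] using hIS.abs_reward_le hM hza
    · simp [Q, hza]
  have Q_contract (V W : Z → ℝ) (δ : ℝ) (hVW : ∀ z, |V z - W z| ≤ δ) (z : Z) (a : A) :
      |Q V z a - Q W z a| ≤ γ * δ := by
    by_cases hza : IsReachable ν P φ0 φ z a
    · have h_sub : Q V z a - Q W z a = γ * nextValue φ PIS (V - W) z a := by
        simp [Q, hza, lookahead, nextValue, mul_sub, Finset.sum_sub_distrib]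
      rw [h_sub, abs_mul, abs_of_nonneg hγ0]
      exact mul_le_mul_of_nonneg_left (hIS.abs_nextValue_le hM hza hVW) hγ0
    · simpa [Q, hza] using mul_nonneg hγ0 ((abs_nonneg _).trans (hVW z))
  obtain ⟨V, V_bdd, hV⟩ := exists_isGreatest_range_of_contraction hγ0 hγ1 Q_zero Q_contract
  choose g hg using fun z => (hV z).1
  refine ⟨V, g, V_bdd, fun z a hza => ?_, fun z hz => ?_⟩
  · simpa only [Q, if_pos hza] using (hV z).2 (Set.mem_range_self a)
  · simpa only [Q, if_pos hz] using hg z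

theorem expRtime_add_mul_stageValue_succ (hIS : IsInformationState ν P r φ0 φ rIS PIS)
    (hM : IsStochastic ν P) (hπ : validPol π) (γ : ℝ) (V : Z → ℝ) (t : ℕ) :
    expRtime ν P r π t + γ * stageValue ν P φ0 φ π V (t + 1) =
      stageExp ν P π t fun w p _ => lookahead γ φ rIS PIS V (sigAgg φ0 φ w p.1) p.2 := by
  rw [expRtime_eq_stageExp, stageValue,
    stageExp_succ ν P hπ t fun w sy => V (sigAgg φ0 φ w sy.2), stageExp_add_mul]
  refine stageExp_congr hM hπ t fun w p hp => ?_
  simp only [mul_add, Finset.sum_add_distrib, mul_left_comm _ γ, ← Finset.mul_sum,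
    ← Finset.sum_mul, sum_jointProb, lookahead]
  rw [hIS.sum_jointProb_mul_reward hπ hp]
  congr 2
  exact hIS.sum_jointProb_mul_nextValue hπ hp V

theorem expRtime_add_mul_stageValue_succ_le (hIS : IsInformationState ν P r φ0 φ rIS PIS)
    (hM : IsStochastic ν P) (hπ : validPol π) {γ : ℝ} {V : Z → ℝ}
    (hV : ∀ z a, IsReachable ν P φ0 φ z a → lookahead γ φ rIS PIS V z a ≤ V z) (t : ℕ) :
    expRtime ν P r π t + γ * stageValue ν P φ0 φ π V (t + 1) ≤ stageValue ν P φ0 φ π V t := by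
  rw [hIS.expRtime_add_mul_stageValue_succ hM hπ]
  refine stageExp_mono hM hπ t fun w p hp => Finset.sum_le_sum fun s _ => ?_
  exact mul_le_mul_of_nonneg_left (hV _ _ ⟨π, w, p.1, hπ, hp, rfl⟩)
    (jointProb_nonneg hM hπ w p s)

end IsInformationState

section Greedy

variable [DecidableEq A]

namespace IsInformationState

variable [DecidableEq Z]

theorem expRtime_add_mul_stageValue_succ_eq (hIS : IsInformationState ν P r φ0 φ rIS PIS)
    (hM : IsStochastic ν P) {γ : ℝ} {V : Z → ℝ} {g : Z → A}
    (hg : ∀ z, IsReachable ν P φ0 φ z (g z) → lookahead γ φ rIS PIS V z (g z) = V z) (t : ℕ) :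
    expRtime ν P r (deterministicPolicy φ0 φ g) t +
        γ * stageValue ν P φ0 φ (deterministicPolicy φ0 φ g) V (t + 1) =
      stageValue ν P φ0 φ (deterministicPolicy φ0 φ g) V t := by
  have hπ := validPol_deterministicPolicy φ0 φ g
  rw [hIS.expRtime_add_mul_stageValue_succ hM hπ]
  refine stageExp_congr hM hπ t fun w p hp => Finset.sum_congr rfl fun s _ => ?_
  have action_eq := eq_of_histProb_deterministicPolicy_pos hp
  rw [action_eq, hg _ ⟨_, w, p.1, hπ, action_eq ▸ hp, rfl⟩]

theorem exists_deterministicPolicy_optimal [Nonempty A]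
    (hIS : IsInformationState ν P r φ0 φ rIS PIS) (hM : IsStochastic ν P) {γ : ℝ}
    (hγ0 : 0 ≤ γ) (hγ1 : γ < 1) :
    ∃ g : Z → A, ∀ π, validPol π →
      valJ γ ν P r π ≤ valJ γ ν P r (deterministicPolicy φ0 φ g) := by
  obtain ⟨V, g, ⟨C, V_bdd⟩, hV, hg⟩ := hIS.exists_optimality_equation hM hγ0 hγ1
  refine ⟨g, fun π hπ => ?_⟩
  have hπg := validPol_deterministicPolicy φ0 φ g
  calc valJ γ ν P r π
      ≤ stageValue ν P φ0 φ π V 0 :=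
        tsum_pow_mul_le_of_add_le hγ0 hγ1 (abs_expRtime_le hM hπ)
          (abs_stageValue_le hM hπ V_bdd) (hIS.expRtime_add_mul_stageValue_succ_le hM hπ hV)
    _ = stageValue ν P φ0 φ (deterministicPolicy φ0 φ g) V 0 := by
        rw [stageValue_zero hπ, stageValue_zero hπg]
    _ = valJ γ ν P r (deterministicPolicy φ0 φ g) :=
        (tsum_pow_mul_eq_of_add_eq hγ0 hγ1 (abs_stageValue_le hM hπg V_bdd)
          (hIS.expRtime_add_mul_stageValue_succ_eq hM hg)).symm

end IsInformationState

end Greedy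

end InformationState

end POMDP

theorem stmt_17_general {S A Y Z : Type*} [Fintype S] [Fintype A] [Fintype Y] [DecidableEq A]
    [DecidableEq Z] [Nonempty A] {γ : ℝ} (hγ0 : 0 ≤ γ) (hγ1 : γ < 1) {r : S → A → ℝ}
    {ν : S × Y → ℝ} {P : S → A → S × Y → ℝ} (hM : POMDP.IsStochastic ν P)
    {φ0 : Y → Z} {φ : Z → Y → A → Z} {rIS : Z → A → ℝ} {PIS : Z → A → Z → ℝ}
    (hIS : POMDP.IsInformationState ν P r φ0 φ rIS PIS) :
    (⨆ π : {π : List (Y × A) → Y → A → ℝ // validPol π ∧ isSD φ0 φ π},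
        valJ γ ν P r π.1) =
      (⨆ π : {π : List (Y × A) → Y → A → ℝ // validPol π}, valJ γ ν P r π.1) ∧
    (⨆ π : {π : List (Y × A) → Y → A → ℝ // validPol π ∧ isSS φ0 φ π},
        valJ γ ν P r π.1) =
      (⨆ π : {π : List (Y × A) → Y → A → ℝ // validPol π}, valJ γ ν P r π.1) ∧
    (⨆ π : {π : List (Y × A) → Y → A → ℝ // validPol π ∧ isND φ0 φ π},
        valJ γ ν P r π.1) =
      (⨆ π : {π : List (Y × A) → Y → A → ℝ // validPol π}, valJ γ ν P r π.1) ∧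
    (⨆ π : {π : List (Y × A) → Y → A → ℝ // validPol π ∧ isNS φ0 φ π},
        valJ γ ν P r π.1) =
      (⨆ π : {π : List (Y × A) → Y → A → ℝ // validPol π}, valJ γ ν P r π.1) := by
  obtain ⟨g, hg⟩ := hIS.exists_deterministicPolicy_optimal hM hγ0 hγ1
  have hπg := POMDP.validPol_deterministicPolicy φ0 φ g
  have stationary_det : isSD φ0 φ (POMDP.deterministicPolicy φ0 φ g) := ⟨g, fun _ _ _ => rfl⟩
  have stationary_stoch : isSS φ0 φ (POMDP.deterministicPolicy φ0 φ g) :=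
    ⟨fun z a => if a = g z then 1 else 0, fun _ _ => rfl⟩
  have nonstationary_det : isND φ0 φ (POMDP.deterministicPolicy φ0 φ g) :=
    ⟨fun _ => g, fun _ _ _ => rfl⟩
  have nonstationary_stoch : isNS φ0 φ (POMDP.deterministicPolicy φ0 φ g) :=
    ⟨fun _ z a => if a = g z then 1 else 0, fun _ _ => rfl⟩
  exact ⟨ciSup_subtype_and_eq hπg stationary_det hg, ciSup_subtype_and_eq hπg stationary_stoch hg,
    ciSup_subtype_and_eq hπg nonstationary_det hg, ciSup_subtype_and_eq hπg nonstationary_stoch hg⟩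

section

variable {S A Y Z : Type*} [Fintype S] [Fintype A] [Fintype Y] [Fintype Z]
variable [DecidableEq A]

/-- **Information state implies collapse of the agent-state policy classes.** If the
agent state satisfies (P1) and (P2), then the optimal values over stationary
deterministic, stationary stochastic, non-stationary deterministic and non-stationary
stochastic agent-state policies all coincide with the optimal history-based value `J*`. -/
theorem stmt_17 [DecidableEq Z] [Nonempty A]
    (γ : ℝ) (hγ0 : 0 < γ) (hγ1 : γ < 1)
    (Rmax : ℝ) (r : S → A → ℝ) (hr : ∀ s a, r s a ∈ Set.Icc (0 : ℝ) Rmax)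
    (ν : S × Y → ℝ) (hν0 : ∀ sy, 0 ≤ ν sy) (hν1 : ∑ sy : S × Y, ν sy = 1)
    (P : S → A → S × Y → ℝ) (hP0 : ∀ s a sy, 0 ≤ P s a sy)
    (hP1 : ∀ s a, ∑ sy : S × Y, P s a sy = 1)
    (φ0 : Y → Z) (φ : Z → Y → A → Z)
    (rIS : Z → A → ℝ) (PIS : Z → A → Z → ℝ)
    -- (P1): sufficient for performance evaluation
    (hIS1 : ∀ π : List (Y × A) → Y → A → ℝ, validPol π →
      ∀ (y : Y) (a : A) (past : List (Y × A)),
        0 < histProb ν P π ((y, a) :: past) →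
        (∑ sv : Fin ((y, a) :: past).length → S,
            probTraj ν P π (zipSV ((y, a) :: past) sv) * r (sv ⟨0, by simp⟩) a) /
          histProb ν P π ((y, a) :: past) = rIS (sigAgg φ0 φ past y) a)
    -- (P2): sufficient for predicting itself
    (hIS2 : ∀ π : List (Y × A) → Y → A → ℝ, validPol π →
      ∀ (y : Y) (a : A) (past : List (Y × A)) (z' : Z),
        0 < histProb ν P π ((y, a) :: past) →
        (∑ sv : Fin ((y, a) :: past).length → S, ∑ sy' : S × Y,
            probTraj ν P π (zipSV ((y, a) :: past) sv) * P (sv ⟨0, by simp⟩) a sy' *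
              (if z' = φ (sigAgg φ0 φ past y) sy'.2 a then 1 else 0)) /
          histProb ν P π ((y, a) :: past) = PIS (sigAgg φ0 φ past y) a z') :
    (⨆ π : {π : List (Y × A) → Y → A → ℝ // validPol π ∧ isSD φ0 φ π},
        valJ γ ν P r π.1) =
      (⨆ π : {π : List (Y × A) → Y → A → ℝ // validPol π}, valJ γ ν P r π.1) ∧
    (⨆ π : {π : List (Y × A) → Y → A → ℝ // validPol π ∧ isSS φ0 φ π},
        valJ γ ν P r π.1) =
      (⨆ π : {π : List (Y × A) → Y → A → ℝ // validPol π}, valJ γ ν P r π.1) ∧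
    (⨆ π : {π : List (Y × A) → Y → A → ℝ // validPol π ∧ isND φ0 φ π},
        valJ γ ν P r π.1) =
      (⨆ π : {π : List (Y × A) → Y → A → ℝ // validPol π}, valJ γ ν P r π.1) ∧
    (⨆ π : {π : List (Y × A) → Y → A → ℝ // validPol π ∧ isNS φ0 φ π},
        valJ γ ν P r π.1) =
      (⨆ π : {π : List (Y × A) → Y → A → ℝ // validPol π}, valJ γ ν P r π.1) :=
  stmt_17_general hγ0.le hγ1 ⟨hν0, hν1, hP0, hP1⟩ ⟨hIS1, hIS2⟩

end
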